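/- arXiv:2512.04601 — 3 statements merged into one kernel-verified Lean document; each statement's English description precedes it below -/
import Mathlib

section
/- Let S and A be finite nonempty types, P : S → A → PMF S a transition kernel, π : S → PMF A a policy, γ a real number with 0 ≤ γ < 1, φ : S → (Fin d → ℝ) a feature map, and w : Fin d → ℝ a weight vector. Suppose the reward function satisfies r(s,a) = ∑_i φ(s) i · w i for all (s,a). Let Ψ^π be the unique solution of Ψ^π(s,a) = φ(s) + γ · ∑_{s'} (P s a) s' · ∑_{a'} (π s') a' · Ψ^π(s',a'), and let Q^π be the unique solution of Q^π(s,a) = r(s,a) + γ · ∑_{s'} (P s a) s' · ∑_{a'} (π s') a' · Q^π(s',a'). Then Q^π(s,a) = ∑_i Ψ^π(s,a) i · w i for all (s,a). -/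
open scoped BigOperators

theorem PMF.sum_toReal_eq_one {α : Type*} [Fintype α] (p : PMF α) :
    ∑ x, (p x).toReal = 1 := by
  rw [← ENNReal.toReal_sum fun x _ => p.apply_ne_top x, ← tsum_fintype (L := .unconditional α),
    p.tsum_coe, ENNReal.toReal_one]

theorem PMF.abs_sum_toReal_mul_le {α : Type*} [Fintype α] (p : PMF α) {f : α → ℝ} {M : ℝ}
    (hf : ∀ x, |f x| ≤ M) : |∑ x, (p x).toReal * f x| ≤ M :=
  calc |∑ x, (p x).toReal * f x| ≤ ∑ x, |(p x).toReal * f x| := Finset.abs_sum_le_sum_abs _ _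
    _ ≤ ∑ x, (p x).toReal * M := by
      refine Finset.sum_le_sum fun x _ => ?_
      rw [abs_mul, abs_of_nonneg ENNReal.toReal_nonneg]
      exact mul_le_mul_of_nonneg_left (hf x) ENNReal.toReal_nonneg
    _ = M := by rw [← Finset.sum_mul, p.sum_toReal_eq_one, one_mul]

/-- The homogeneous discounted Bellman equation has only the zero solution. -/
theorem eq_zero_of_homogeneous_bellman {S A : Type*} [Fintype S] [Fintype A]
    (P : S → A → PMF S) (π : S → PMF A) {γ : ℝ} (hγ0 : 0 ≤ γ) (hγ1 : γ < 1) {D : S × A → ℝ}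
    (hD : ∀ s a, D (s, a) = γ * ∑ s', ((P s a) s').toReal *
      ∑ a', ((π s') a').toReal * D (s', a')) : D = 0 := by
  have hle : ‖D‖ ≤ γ * ‖D‖ := by
    refine (pi_norm_le_iff_of_nonneg (by positivity)).2 fun ⟨s, a⟩ => ?_
    rw [hD, Real.norm_eq_abs, abs_mul, abs_of_nonneg hγ0]
    exact mul_le_mul_of_nonneg_left ((P s a).abs_sum_toReal_mul_le fun s' =>
      (π s').abs_sum_toReal_mul_le fun a' => norm_le_pi_norm D (s', a')) hγ0
  refine norm_eq_zero.1 (le_antisymm ?_ (norm_nonneg D))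
  nlinarith [norm_nonneg D]

/-- If the reward is linear in the features, `r(s,a) = φ(s)·w`, then the
Q-function is linear in the successor features: `Q^π(s,a) = Ψ^π(s,a)·w`. -/
theorem qfun_eq_successor_features_dot_w {S A : Type*} {d : ℕ}
    [Fintype S] [Nonempty S] [Fintype A] [Nonempty A]
    (P : S → A → PMF S) (π : S → PMF A) (γ : ℝ) (hγ0 : 0 ≤ γ) (hγ1 : γ < 1)
    (φ : S → Fin d → ℝ) (w : Fin d → ℝ) (r : S → A → ℝ)
    (hr : ∀ (s : S) (a : A), r s a = ∑ i : Fin d, φ s i * w i)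
    (Ψ : S × A → Fin d → ℝ)
    (hΨ : ∀ (s : S) (a : A) (i : Fin d),
      Ψ (s, a) i = φ s i + γ * ∑ s' : S, ((P s a) s').toReal *
        ∑ a' : A, ((π s') a').toReal * Ψ (s', a') i)
    (Q : S × A → ℝ)
    (hQ : ∀ (s : S) (a : A),
      Q (s, a) = r s a + γ * ∑ s' : S, ((P s a) s').toReal *
        ∑ a' : A, ((π s') a').toReal * Q (s', a')) :
    ∀ (s : S) (a : A), Q (s, a) = ∑ i : Fin d, Ψ (s, a) i * w i := by
  have hΨw : ∀ s a, ∑ i, Ψ (s, a) i * w i = r s a + γ * ∑ s', ((P s a) s').toReal *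
      ∑ a', ((π s') a').toReal * ∑ i, Ψ (s', a') i * w i := by
    intro s a
    have hswap : ∑ s', ((P s a) s').toReal *
        ∑ a', ((π s') a').toReal * ∑ i, Ψ (s', a') i * w i =
        ∑ i, (∑ s', ((P s a) s').toReal * ∑ a', ((π s') a').toReal * Ψ (s', a') i) * w i := by
      simp only [Finset.mul_sum, Finset.sum_mul]
      conv_rhs => rw [Finset.sum_comm]
      refine Finset.sum_congr rfl fun s' _ => ?_
      rw [Finset.sum_comm]
      simp only [mul_assoc]
    rw [hswap, hr, Finset.mul_sum, ← Finset.sum_add_distrib]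
    refine Finset.sum_congr rfl fun i _ => ?_
    rw [hΨ s a i]
    ring
  have hzero : (fun x => Q x - ∑ i, Ψ x i * w i) = 0 := by
    refine eq_zero_of_homogeneous_bellman P π hγ0 hγ1 fun s a => ?_
    simp only [mul_sub, Finset.sum_sub_distrib]
    rw [hQ s a, hΨw s a]
    ring
  exact fun s a => sub_eq_zero.1 (congrFun hzero (s, a))
end

section
/- Let S and A be finite nonempty types, P : S → A → PMF S a transition kernel, γ a real number with 0 ≤ γ < 1, and r : S → A → ℝ a reward function. For a policy π : S → PMF A let Q^π denote the unique solution of Q^π(s,a) = r(s,a) + γ · ∑_{s'} (P s a) s' · ∑_{a'} (π s') a' · Q^π(s',a'). Suppose two policies π and π' satisfy, for every state s, ∑_a (π' s) a · Q^π(s,a) ≥ ∑_a (π s) a · Q^π(s,a). Then Q^{π'}(s,a) ≥ Q^π(s,a) for all (s,a). -/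
open scoped BigOperators

/-- Averaging against a probability mass function preserves a uniform gap between functions. -/
theorem PMF.sum_toReal_mul_add_le {α : Type*} [Fintype α] (p : PMF α) {f g : α → ℝ} {m : ℝ}
    (h : ∀ x, f x + m ≤ g x) :
    ∑ x, (p x).toReal * f x + m ≤ ∑ x, (p x).toReal * g x :=
  calc ∑ x, (p x).toReal * f x + m = ∑ x, (p x).toReal * (f x + m) := by
        simp_rw [mul_add, Finset.sum_add_distrib, ← Finset.sum_mul, p.sum_toReal_eq_one, one_mul]
    _ ≤ ∑ x, (p x).toReal * g x := by
        gcongr with x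
        exact h x

/-- Monotonic policy improvement: if `π'` puts at least as much value as `π`
on the Q-function of `π` at every state, then `Q^{π'} ≥ Q^π` pointwise. -/
theorem policy_improvement {S A : Type*}
    [Fintype S] [Nonempty S] [Fintype A] [Nonempty A]
    (P : S → A → PMF S) (γ : ℝ) (hγ0 : 0 ≤ γ) (hγ1 : γ < 1)
    (r : S → A → ℝ) (π π' : S → PMF A)
    (Qπ : S × A → ℝ)
    (hQπ : ∀ (s : S) (a : A),
      Qπ (s, a) = r s a + γ * ∑ s' : S, ((P s a) s').toReal *
        ∑ a' : A, ((π s') a').toReal * Qπ (s', a'))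
    (Qπ' : S × A → ℝ)
    (hQπ' : ∀ (s : S) (a : A),
      Qπ' (s, a) = r s a + γ * ∑ s' : S, ((P s a) s').toReal *
        ∑ a' : A, ((π' s') a').toReal * Qπ' (s', a'))
    (himp : ∀ s : S,
      ∑ a : A, ((π' s) a).toReal * Qπ (s, a) ≥
        ∑ a : A, ((π s) a).toReal * Qπ (s, a)) :
    ∀ (s : S) (a : A), Qπ' (s, a) ≥ Qπ (s, a) := by
  obtain ⟨⟨s₀, a₀⟩, hmin⟩ := Finite.exists_min fun x => Qπ' x - Qπ x
  set m := Qπ' (s₀, a₀) - Qπ (s₀, a₀) with hm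
  have hgap : ∀ x, Qπ x + m ≤ Qπ' x := fun x => by linarith [hmin x]
  have hstate : ∀ s, ∑ a, ((π s) a).toReal * Qπ (s, a) + m ≤
      ∑ a, ((π' s) a).toReal * Qπ' (s, a) := fun s => by
    linarith [himp s, (π' s).sum_toReal_mul_add_le fun a => hgap (s, a)]
  have hstep := mul_le_mul_of_nonneg_left ((P s₀ a₀).sum_toReal_mul_add_le hstate) hγ0
  have hm_ge : γ * m ≤ m := by
    rw [mul_add] at hstep
    linarith [hQπ s₀ a₀, hQπ' s₀ a₀]
  have hm_nonneg : 0 ≤ m := by nlinarith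
  intro s a
  linarith [hgap (s, a)]
end

section
/- Let S and A be finite nonempty types, P : S → A → PMF S a transition kernel, γ a real number with 0 ≤ γ < 1, and r : S → A → ℝ a reward function. For a policy π : S → PMF A let Q^π denote the unique solution of Q^π(s,a) = r(s,a) + γ · ∑_{s'} (P s a) s' · ∑_{a'} (π s') a' · Q^π(s',a'). Then there exists a deterministic policy, i.e. a function μ* : S → A (identified with the policy s ↦ PMF.pure (μ* s)), such that for every policy π : S → PMF A and every (s,a), Q^{μ*}(s,a) ≥ Q^π(s,a). -/
open scoped BigOperators

/-- Expectations under a probability mass function are monotone up to additive constants. -/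
theorem PMF.sum_toReal_mul_le_add {α : Type*} [Fintype α] (p : PMF α) {f g : α → ℝ} {d : ℝ}
    (h : ∀ x, f x ≤ g x + d) :
    ∑ x, (p x).toReal * f x ≤ ∑ x, (p x).toReal * g x + d := by
  calc ∑ x, (p x).toReal * f x ≤ ∑ x, (p x).toReal * (g x + d) :=
        Finset.sum_le_sum fun x _ => mul_le_mul_of_nonneg_left (h x) ENNReal.toReal_nonneg
    _ = ∑ x, (p x).toReal * g x + d := by
        simp only [mul_add, Finset.sum_add_distrib, ← Finset.sum_mul, p.sum_toReal_eq_one, one_mul]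

namespace MDP

variable {S A : Type*} [Fintype A] [Nonempty A]

/-- The greedy state value associated with a state-action value function. -/
noncomputable def greedyValue (Q : S × A → ℝ) (s : S) : ℝ :=
  Finset.univ.sup' Finset.univ_nonempty fun a => Q (s, a)

/-- The Bellman optimality operator on state-action value functions. -/
noncomputable def bellmanOptimality [Fintype S] (P : S → A → PMF S) (γ : ℝ) (r : S → A → ℝ)
    (Q : S × A → ℝ) : S × A → ℝ :=
  fun x => r x.1 x.2 + γ * ∑ s', (P x.1 x.2 s').toReal * greedyValue Q s'

theorem le_greedyValue (Q : S × A → ℝ) (s : S) (a : A) : Q (s, a) ≤ greedyValue Q s :=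
  Finset.le_sup' (fun a => Q (s, a)) (Finset.mem_univ a)

theorem exists_greedyValue_eq (Q : S × A → ℝ) (s : S) : ∃ a, greedyValue Q s = Q (s, a) := by
  obtain ⟨a, -, ha⟩ :=
    Finset.exists_mem_eq_sup' (Finset.univ_nonempty (α := A)) fun a => Q (s, a)
  exact ⟨a, ha⟩

theorem greedyValue_le_add {Q Q₂ : S × A → ℝ} {d : ℝ} (h : ∀ x, Q x ≤ Q₂ x + d) (s : S) :
    greedyValue Q s ≤ greedyValue Q₂ s + d :=
  Finset.sup'_le _ _ fun a _ => (h (s, a)).trans (by gcongr; exact le_greedyValue Q₂ s a)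

/-- The mean of the action values at a state is at most the greedy value there. -/
theorem sum_toReal_mul_le_greedyValue (p : PMF A) (Q : S × A → ℝ) (s : S) :
    ∑ a, (p a).toReal * Q (s, a) ≤ greedyValue Q s := by
  simpa using p.sum_toReal_mul_le_add (g := fun _ => 0) (d := greedyValue Q s)
    fun a => by simpa using le_greedyValue Q s a

variable [Fintype S]

theorem bellmanOptimality_le_add (P : S → A → PMF S) {γ : ℝ} (hγ : 0 ≤ γ) (r : S → A → ℝ)
    {Q Q₂ : S × A → ℝ} {d : ℝ} (h : ∀ x, Q x ≤ Q₂ x + d) (x : S × A) :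
    bellmanOptimality P γ r Q x ≤ bellmanOptimality P γ r Q₂ x + γ * d := by
  have hsum := (P x.1 x.2).sum_toReal_mul_le_add (greedyValue_le_add h)
  have hmul := mul_le_mul_of_nonneg_left hsum hγ
  simp only [bellmanOptimality]
  linarith

theorem contractingWith_bellmanOptimality (P : S → A → PMF S) {γ : ℝ} (hγ0 : 0 ≤ γ)
    (hγ1 : γ < 1) (r : S → A → ℝ) :
    ContractingWith ⟨γ, hγ0⟩ (bellmanOptimality P γ r) := by
  have le_add_dist (Q Q₂ : S × A → ℝ) (x : S × A) : Q x ≤ Q₂ x + dist Q Q₂ := by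
    have := (le_abs_self (Q x - Q₂ x)).trans (dist_le_pi_dist Q Q₂ x)
    linarith
  refine ⟨hγ1, LipschitzWith.of_dist_le_mul fun Q Q₂ => ?_⟩
  refine (dist_pi_le_iff (mul_nonneg hγ0 dist_nonneg)).2 fun x => abs_sub_le_iff.2 ⟨?_, ?_⟩
  · exact sub_le_iff_le_add'.2 (bellmanOptimality_le_add P hγ0 r (le_add_dist Q Q₂) x)
  · rw [dist_comm Q Q₂]
    exact sub_le_iff_le_add'.2 (bellmanOptimality_le_add P hγ0 r (le_add_dist Q₂ Q) x)

/-- A subsolution of the Bellman optimality equation lies below any solution. -/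
theorem le_of_le_bellmanOptimality (P : S → A → PMF S) {γ : ℝ} (hγ0 : 0 ≤ γ) (hγ1 : γ < 1)
    (r : S → A → ℝ) {Q Q₂ : S × A → ℝ} (hQ : ∀ x, Q x ≤ bellmanOptimality P γ r Q x)
    (hQ₂ : bellmanOptimality P γ r Q₂ = Q₂) (x : S × A) : Q x ≤ Q₂ x := by
  have : Nonempty (S × A) := ⟨x⟩
  obtain ⟨y, hy⟩ := Finite.exists_max fun x => Q x - Q₂ x
  have hstep := bellmanOptimality_le_add P hγ0 r (Q := Q) (Q₂ := Q₂) (d := Q y - Q₂ y)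
    (fun z => by linarith [hy z]) y
  rw [hQ₂] at hstep
  have hmax : Q y - Q₂ y ≤ 0 := by nlinarith [hQ y]
  linarith [hy x]

end MDP

open MDP

/-- Existence of an optimal deterministic policy: there is a deterministic
policy `μ*` (identified with the stochastic policy `s ↦ PMF.pure (μ* s)`)
whose Q-function dominates the Q-function of every stochastic policy. -/
theorem exists_optimal_deterministic_policy {S A : Type*}
    [Fintype S] [Nonempty S] [Fintype A] [Nonempty A]
    (P : S → A → PMF S) (γ : ℝ) (hγ0 : 0 ≤ γ) (hγ1 : γ < 1)
    (r : S → A → ℝ) :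
    ∃ (μstar : S → A) (Qstar : S × A → ℝ),
      (∀ (s : S) (a : A),
        Qstar (s, a) = r s a + γ * ∑ s' : S, ((P s a) s').toReal *
          ∑ a' : A, ((PMF.pure (μstar s') : PMF A) a').toReal * Qstar (s', a')) ∧
      ∀ (π : S → PMF A) (Qπ : S × A → ℝ),
        (∀ (s : S) (a : A),
          Qπ (s, a) = r s a + γ * ∑ s' : S, ((P s a) s').toReal *
            ∑ a' : A, ((π s') a').toReal * Qπ (s', a')) →
        ∀ (s : S) (a : A), Qstar (s, a) ≥ Qπ (s, a) := by
  have hfix := (contractingWith_bellmanOptimality P hγ0 hγ1 r).fixedPoint_isFixedPt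
  set Q := ContractingWith.fixedPoint _ (contractingWith_bellmanOptimality P hγ0 hγ1 r)
  choose μ hμ using exists_greedyValue_eq Q
  refine ⟨μ, Q, fun s a => ?_, fun π Qπ hπ s a => ?_⟩
  · have hmean (s' : S) :
        ∑ a', ((PMF.pure (μ s') : PMF A) a').toReal * Q (s', a') = greedyValue Q s' := by
      classical
      simp [PMF.pure_apply, apply_ite ENNReal.toReal, hμ]
    simp only [hmean]
    exact (congrFun hfix (s, a)).symm
  · refine le_of_le_bellmanOptimality P hγ0 hγ1 r (fun x => ?_) hfix (s, a)
    rw [← Prod.mk.eta (p := x), hπ]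
    simp only [bellmanOptimality]
    gcongr with s'
    exact sum_toReal_mul_le_greedyValue (π s') Qπ s'
end
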